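/- Fix real constants α, β, γ and let (u,v) be a regular solution of the Schrödinger–Korteweg–de Vries system. Then the quantities I₁(t) = ∫_ℝ |u(t,x)|² dx and I₃(t) = ∫_ℝ ( α·v(t,x)² + 2γ·Im( u(t,x)·conj(∂ₓu(t,x)) ) ) dx are independent of t: I₁(t) = I₁(0) and I₃(t) = I₃(0) for all t ∈ ℝ. -/

import Mathlib

open MeasureTheory Filter

/-- A regular solution of the Schrödinger–Korteweg–de Vries system
    `i ∂ₜu + ∂ₓ²u = α u v + β u |u|²`,
    `∂ₜv + ∂ₓ³v + v ∂ₓv = γ ∂ₓ(|u|²)`: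
    `u, v` are smooth in `(t,x)`, Schwartz in `x` for each fixed `t`, satisfy the
    equations pointwise, and have uniformly-in-time bounded `H¹ₓ` norms. -/
def IsSKdVSolution (α β γ : ℝ) (u : ℝ → ℝ → ℂ) (v : ℝ → ℝ → ℝ) : Prop :=
  ContDiff ℝ (⊤ : ℕ∞) (fun p : ℝ × ℝ => u p.1 p.2) ∧
  ContDiff ℝ (⊤ : ℕ∞) (fun p : ℝ × ℝ => v p.1 p.2) ∧
  (∀ t : ℝ, ∃ f : SchwartzMap ℝ ℂ, ∀ x, f x = u t x) ∧
  (∀ t : ℝ, ∃ g : SchwartzMap ℝ ℝ, ∀ x, g x = v t x) ∧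
  (∀ t x : ℝ,
    Complex.I * deriv (fun s => u s x) t + iteratedDeriv 2 (u t) x
      = (α : ℂ) * u t x * (v t x : ℂ) + (β : ℂ) * u t x * (‖u t x‖ : ℂ) ^ 2) ∧
  (∀ t x : ℝ,
    deriv (fun s => v s x) t + iteratedDeriv 3 (v t) x + v t x * deriv (v t) x
      = γ * deriv (fun y => ‖u t y‖ ^ 2) x) ∧
  (∃ C : ℝ, ∀ t : ℝ,
    (∫ x : ℝ, ‖u t x‖ ^ 2) + (∫ x : ℝ, ‖deriv (u t) x‖ ^ 2) +
      (∫ x : ℝ, (v t x) ^ 2) + (∫ x : ℝ, (deriv (v t) x) ^ 2) ≤ C)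

/-!
Both densities obey local conservation laws `∂ₜm = ∂ₓA + ∂ₓ³B` in which, by the Sobolev inequality
`‖f‖²_∞ ≤ ‖f‖² + ‖f'‖²`, the `L¹` norms of `A` and `B` are bounded by the `H¹` norm of the solution.
Decay of the flux at infinity is not uniform in time, so it cannot be differentiated under an
integral over the whole line; instead `m` is tested against a cutoff `χ(cx)`. Moving the `x`
derivatives onto `χ` bounds the variation in time of `∫ χ(cx) m` by `O(|c|)`, and `c → 0` gives the
conservation of `∫ m`.
-/

open scoped ContDiff Topology RealInnerProductSpace

section PartialDerivatives

variable {E : Type*} [NormedAddCommGroup E] [NormedSpace ℝ E] {w : ℝ → ℝ → E}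

theorem hasDerivAt_curry_left (hw : Differentiable ℝ fun p : ℝ × ℝ => w p.1 p.2) (t x : ℝ) :
    HasDerivAt (fun s => w s x) (fderiv ℝ (fun p : ℝ × ℝ => w p.1 p.2) (t, x) (1, 0)) t :=
  (hw (t, x)).hasFDerivAt.comp_hasDerivAt (f := fun s : ℝ => (s, x)) t
    ((hasDerivAt_id t).prodMk (hasDerivAt_const t x))

theorem hasDerivAt_curry_right (hw : Differentiable ℝ fun p : ℝ × ℝ => w p.1 p.2) (t x : ℝ) :
    HasDerivAt (w t) (fderiv ℝ (fun p : ℝ × ℝ => w p.1 p.2) (t, x) (0, 1)) x :=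
  (hw (t, x)).hasFDerivAt.comp_hasDerivAt x ((hasDerivAt_const x t).prodMk (hasDerivAt_id x))

theorem contDiff_deriv_curry_left {n : ℕ∞ω}
    (hw : ContDiff ℝ (n + 1) fun p : ℝ × ℝ => w p.1 p.2) :
    ContDiff ℝ n fun p : ℝ × ℝ => deriv (fun s => w s p.2) p.1 := by
  simp only [fun t x => (hasDerivAt_curry_left (hw.differentiable (by simp)) t x).deriv]
  exact (hw.fderiv_right le_rfl).clm_apply contDiff_const

theorem contDiff_deriv_curry_right {n : ℕ∞ω}
    (hw : ContDiff ℝ (n + 1) fun p : ℝ × ℝ => w p.1 p.2) :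
    ContDiff ℝ n fun p : ℝ × ℝ => deriv (w p.1) p.2 := by
  simp only [fun t x => (hasDerivAt_curry_right (hw.differentiable (by simp)) t x).deriv]
  exact (hw.fderiv_right le_rfl).clm_apply contDiff_const

theorem hasDerivAt_deriv_curry_right (hw : ContDiff ℝ 2 fun p : ℝ × ℝ => w p.1 p.2)
    {w' : ℝ → E} {t : ℝ} (hw' : ∀ y, HasDerivAt (fun s => w s y) (w' y) t) (x : ℝ) :
    HasDerivAt (fun s => deriv (w s) x) (deriv w' x) t := by
  have hd : Differentiable ℝ fun p : ℝ × ℝ => w p.1 p.2 := hw.differentiable (by simp)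
  have hd2 : Differentiable ℝ (fderiv ℝ fun p : ℝ × ℝ => w p.1 p.2) :=
    (hw.fderiv_right (m := 1) (by norm_num)).differentiable one_ne_zero
  have hsymm : IsSymmSndFDerivAt ℝ (fun p : ℝ × ℝ => w p.1 p.2) (t, x) :=
    hw.contDiffAt.isSymmSndFDerivAt (by simp)
  have hw'_eq : w' = fun y => fderiv ℝ (fun p : ℝ × ℝ => w p.1 p.2) (t, y) (1, 0) :=
    funext fun y => (hw' y).unique (hasDerivAt_curry_left hd t y)
  have hx : HasDerivAt w'
      (fderiv ℝ (fderiv ℝ fun p : ℝ × ℝ => w p.1 p.2) (t, x) (0, 1) (1, 0)) x := by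
    rw [hw'_eq]
    simpa using (hasDerivAt_curry_right
      (w := fun s y => fderiv ℝ (fun p : ℝ × ℝ => w p.1 p.2) (s, y)) hd2 t x
        ).clm_apply (hasDerivAt_const x ((1 : ℝ), (0 : ℝ)))
  rw [hx.deriv, hsymm (0, 1) (1, 0)]
  simp only [fun s => (hasDerivAt_curry_right hd s x).deriv]
  simpa using (hasDerivAt_curry_left
    (w := fun s y => fderiv ℝ (fun p : ℝ × ℝ => w p.1 p.2) (s, y)) hd2 t x
      ).clm_apply (hasDerivAt_const t ((0 : ℝ), (1 : ℝ)))

end PartialDerivatives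

section ConservationLaw

variable {E : Type*} [NormedAddCommGroup E] [NormedSpace ℝ E]

theorem hasCompactSupport_iteratedDeriv {φ : ℝ → E} (hφ : HasCompactSupport φ) :
    ∀ n, HasCompactSupport (iteratedDeriv n φ)
  | 0 => by simpa only [iteratedDeriv_zero] using hφ
  | n + 1 => by
    rw [iteratedDeriv_succ]
    exact (hasCompactSupport_iteratedDeriv hφ n).deriv

theorem integral_smul_iteratedDeriv {φ : ℝ → ℝ} (hφc : HasCompactSupport φ) {n : ℕ} {f : ℝ → E}
    (hφ : ContDiff ℝ n φ) (hf : ContDiff ℝ n f) :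
    ∫ x, φ x • iteratedDeriv n f x = (-1 : ℝ) ^ n • ∫ x, iteratedDeriv n φ x • f x := by
  induction n generalizing f with
  | zero => simp
  | succ n ih =>
    have hf' : ContDiff ℝ n (deriv f) := (contDiff_succ_iff_deriv.mp hf).2.2
    have hφ' : Continuous (iteratedDeriv (n + 1) φ) := hφ.continuous_iteratedDeriv' (n + 1)
    have hφn : Continuous (iteratedDeriv n φ) := hφ.continuous_iteratedDeriv n (by norm_cast; lia)
    have hsupp := hasCompactSupport_iteratedDeriv hφc
    have hparts : ∫ x, iteratedDeriv n φ x • deriv f x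
        = -∫ x, iteratedDeriv (n + 1) φ x • f x :=
      integral_bilinear_hasDerivAt_right_eq_neg_left_of_integrable
        (L := ContinuousLinearMap.lsmul ℝ ℝ)
        (fun x _ => by
          rw [iteratedDeriv_succ]
          exact (hφ.differentiable_iteratedDeriv n (by norm_cast; lia) x).hasDerivAt)
        (fun x _ => (hf.differentiable (by simp) x).hasDerivAt)
        ((hφn.smul hf'.continuous).integrable_of_hasCompactSupport (hsupp n).smul_right)
        ((hφ'.smul hf.continuous).integrable_of_hasCompactSupport (hsupp (n + 1)).smul_right)
        ((hφn.smul hf.continuous).integrable_of_hasCompactSupport (hsupp n).smul_right)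
    rw [iteratedDeriv_succ', ih (hφ.of_le (by norm_cast; lia)) hf', hparts, pow_succ, smul_neg,
      mul_neg_one, neg_smul]

theorem norm_integral_smul_iteratedDeriv_le {φ : ℝ → ℝ} (hφc : HasCompactSupport φ) {n : ℕ}
    (hφ : ContDiff ℝ n φ) {f : ℝ → E} (hf : ContDiff ℝ n f) (hfi : Integrable f) {K : ℝ}
    (hK : ∀ x, ‖iteratedDeriv n φ x‖ ≤ K) :
    ‖∫ x, φ x • iteratedDeriv n f x‖ ≤ K * ∫ x, ‖f x‖ := by
  rw [integral_smul_iteratedDeriv hφc hφ hf, norm_smul, norm_pow, norm_neg, norm_one, one_pow,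
    one_mul, ← integral_const_mul]
  refine norm_integral_le_of_norm_le (hfi.norm.const_mul K) (Eventually.of_forall fun x => ?_)
  rw [norm_smul]
  gcongr
  exact hK x

theorem hasDerivAt_integral_smul {φ : ℝ → ℝ} (hφ : Continuous φ) (hφc : HasCompactSupport φ)
    {m : ℝ → ℝ → E} (hm : ContDiff ℝ 1 fun p : ℝ × ℝ => m p.1 p.2) (t : ℝ) :
    HasDerivAt (fun s => ∫ x, φ x • m s x) (∫ x, φ x • deriv (fun s => m s x) t) t := by
  have hm' : Continuous fun p : ℝ × ℝ => deriv (fun s => m s p.2) p.1 :=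
    (contDiff_deriv_curry_left (n := 0) (by simpa using hm)).continuous
  have hφm : ∀ s, Continuous fun x => φ x • m s x := fun s =>
    hφ.smul (hm.continuous.comp (Continuous.prodMk_right s))
  obtain ⟨K, hK⟩ := ((isCompact_closedBall t 1).prod hφc).exists_bound_of_continuousOn
    hm'.continuousOn
  refine (hasDerivAt_integral_of_dominated_loc_of_deriv_le (bound := fun x => ‖φ x‖ * K)
    (F' := fun s x => φ x • deriv (fun s => m s x) s) (Metric.closedBall_mem_nhds t one_pos)
    (Eventually.of_forall fun s => (hφm s).aestronglyMeasurable)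
    ((hφm t).integrable_of_hasCompactSupport hφc.smul_right)
    (hφ.smul (hm'.comp (Continuous.prodMk_right t))).aestronglyMeasurable
    (Eventually.of_forall fun x s hs => ?_)
    ((hφ.integrable_of_hasCompactSupport hφc).norm.mul_const K)
    (Eventually.of_forall fun x s _ => ?_)).2
  · rw [norm_smul]
    by_cases hx : x ∈ tsupport φ
    · gcongr
      exact hK (s, x) ⟨hs, hx⟩
    · simp [image_eq_zero_of_notMem_tsupport hx]
  · exact ((hasDerivAt_curry_left (hm.differentiable one_ne_zero) s x).differentiableAt.hasDerivAt
      ).const_smul (φ x)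

theorem tendsto_integral_comp_mul_smul {χ : ℝ → ℝ} (hχ : Continuous χ) (hχc : HasCompactSupport χ)
    {f : ℝ → E} (hf : Integrable f) :
    Tendsto (fun c => ∫ x, χ (c * x) • f x) (𝓝 0) (𝓝 (χ 0 • ∫ x, f x)) := by
  obtain ⟨K, hK⟩ := hχc.exists_bound_of_continuous hχ
  rw [← integral_smul]
  refine tendsto_integral_filter_of_dominated_convergence (fun x => K * ‖f x‖)
    (Eventually.of_forall fun c => ?_) (Eventually.of_forall fun c => ?_) (hf.norm.const_mul K)
    (Eventually.of_forall fun x => ?_)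
  · exact (hχ.comp (continuous_const_mul c)).aestronglyMeasurable.smul hf.1
  · refine Eventually.of_forall fun x => ?_
    rw [norm_smul]
    gcongr
    exact hK _
  · have hcx : Tendsto (fun c => χ (c * x)) (𝓝 0) (𝓝 (χ 0)) :=
      (hχ.comp (continuous_mul_const x)).tendsto' 0 _ (by simp)
    exact hcx.smul_const (f x)

variable {ι : Type*} [Fintype ι] {k : ι → ℕ} {m : ℝ → ℝ → E} {F : ι → ℝ → ℝ → E} {C : ι → ℝ}
  {a b : ℝ}

theorem norm_integral_smul_sub_le_of_conservation_law
    (hm : ContDiff ℝ 1 fun p : ℝ × ℝ => m p.1 p.2)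
    (hF : ∀ i t, ContDiff ℝ (k i) (F i t)) (hFi : ∀ i, ∀ t ∈ Set.uIcc a b, Integrable (F i t))
    (hlaw : ∀ t x, deriv (fun s => m s x) t = ∑ i, iteratedDeriv (k i) (F i t) x)
    (hC : ∀ i, ∀ t ∈ Set.uIcc a b, ∫ x, ‖F i t x‖ ≤ C i)
    {φ : ℝ → ℝ} (hφ : ContDiff ℝ ∞ φ) (hφc : HasCompactSupport φ) {K : ι → ℝ}
    (hK : ∀ i x, ‖iteratedDeriv (k i) φ x‖ ≤ K i) :
    ‖(∫ x, φ x • m b x) - ∫ x, φ x • m a x‖ ≤ (∑ i, K i * C i) * ‖b - a‖ := by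
  refine Convex.norm_image_sub_le_of_norm_hasDerivWithin_le
    (fun t _ => (hasDerivAt_integral_smul hφ.continuous hφc hm t).hasDerivWithinAt)
    (fun t ht => ?_) (convex_uIcc a b) Set.left_mem_uIcc Set.right_mem_uIcc
  have hint : ∀ i, Integrable fun x => φ x • iteratedDeriv (k i) (F i t) x := fun i =>
    (hφ.continuous.smul ((hF i t).continuous_iteratedDeriv' _)).integrable_of_hasCompactSupport
      hφc.smul_right
  calc ‖∫ x, φ x • deriv (fun s => m s x) t‖
      = ‖∑ i, ∫ x, φ x • iteratedDeriv (k i) (F i t) x‖ := by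
        simp only [hlaw, Finset.smul_sum]
        rw [integral_finsetSum _ fun i _ => hint i]
    _ ≤ ∑ i, K i * C i := norm_sum_le_of_le _ fun i _ => by
        have hKi : 0 ≤ K i := (norm_nonneg _).trans (hK i 0)
        exact (norm_integral_smul_iteratedDeriv_le hφc (contDiff_infty.1 hφ _) (hF i t)
          (hFi i t ht) (hK i)).trans (by gcongr; exact hC i t ht)

theorem integral_eq_of_conservation_law
    (hm : ContDiff ℝ 1 fun p : ℝ × ℝ => m p.1 p.2) (hmi : ∀ t ∈ Set.uIcc a b, Integrable (m t))
    (hk : ∀ i, k i ≠ 0)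
    (hF : ∀ i t, ContDiff ℝ (k i) (F i t)) (hFi : ∀ i, ∀ t ∈ Set.uIcc a b, Integrable (F i t))
    (hlaw : ∀ t x, deriv (fun s => m s x) t = ∑ i, iteratedDeriv (k i) (F i t) x)
    (hC : ∀ i, ∀ t ∈ Set.uIcc a b, ∫ x, ‖F i t x‖ ≤ C i) :
    ∫ x, m b x = ∫ x, m a x := by
  let χ : ContDiffBump (0 : ℝ) := default
  have hχ : ContDiff ℝ ∞ χ := χ.contDiff
  have hχ0 : χ 0 = 1 := χ.one_of_mem_closedBall (Metric.mem_closedBall_self χ.rIn_pos.le)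
  choose K hK using fun n : ℕ =>
    (hasCompactSupport_iteratedDeriv χ.hasCompactSupport n).exists_bound_of_continuous
      (contDiff_infty.1 hχ n).continuous_iteratedDeriv'
  have hdilate : ∀ n (c x : ℝ), ‖iteratedDeriv n (fun x => χ (c * x)) x‖ ≤ |c| ^ n * K n := by
    intro n c x
    rw [iteratedDeriv_comp_const_mul (contDiff_infty.1 hχ n), norm_mul, norm_pow, Real.norm_eq_abs]
    gcongr
    exact hK n _
  have hbound : ∀ᶠ c in 𝓝[≠] (0 : ℝ), ‖(∫ x, χ (c * x) • m b x) - ∫ x, χ (c * x) • m a x‖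
      ≤ (∑ i, |c| ^ k i * K (k i) * C i) * ‖b - a‖ := by
    filter_upwards [self_mem_nhdsWithin] with c hc
    exact norm_integral_smul_sub_le_of_conservation_law hm hF hFi hlaw hC
      (hχ.comp (contDiff_const.mul contDiff_id))
      (χ.hasCompactSupport.comp_homeomorph (Homeomorph.mulLeft₀ c hc)) fun i => hdilate (k i) c
  have hsmall : Tendsto (fun c : ℝ => (∑ i, |c| ^ k i * K (k i) * C i) * ‖b - a‖) (𝓝 0) (𝓝 0) :=
    Continuous.tendsto' (by fun_prop) _ _ (by simp [hk])
  have hlim {t} (ht : t ∈ Set.uIcc a b) :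
      Tendsto (fun c => ∫ x, χ (c * x) • m t x) (𝓝[≠] 0) (𝓝 (∫ x, m t x)) := by
    simpa [hχ0] using (tendsto_integral_comp_mul_smul hχ.continuous χ.hasCompactSupport
      (hmi t ht)).mono_left nhdsWithin_le_nhds
  have hdist := le_of_tendsto_of_tendsto
    ((hlim Set.right_mem_uIcc).sub (hlim Set.left_mem_uIcc)).norm
    (hsmall.mono_left nhdsWithin_le_nhds) hbound
  exact sub_eq_zero.1 (norm_le_zero_iff.1 hdist)

theorem integral_eq_of_conservation_law_of_isBigO {e : ℝ → ℝ → ℝ} {M : ℝ}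
    (hei : ∀ t ∈ Set.uIcc a b, Integrable (e t)) (heM : ∀ t ∈ Set.uIcc a b, ∫ x, ‖e t x‖ ≤ M)
    (hm : ContDiff ℝ 1 fun p : ℝ × ℝ => m p.1 p.2)
    (hme : (fun p : ℝ × ℝ => m p.1 p.2) =O[𝓟 (Set.uIcc a b ×ˢ Set.univ)] fun p => e p.1 p.2)
    (hk : ∀ i, k i ≠ 0) (hF : ∀ i t, ContDiff ℝ (k i) (F i t))
    (hFe : ∀ i, (fun p : ℝ × ℝ => F i p.1 p.2) =O[𝓟 (Set.uIcc a b ×ˢ Set.univ)]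
      fun p => e p.1 p.2)
    (hlaw : ∀ t x, deriv (fun s => m s x) t = ∑ i, iteratedDeriv (k i) (F i t) x) :
    ∫ x, m b x = ∫ x, m a x := by
  have hslice {G : ℝ → ℝ → E}
      (hG : (fun p : ℝ × ℝ => G p.1 p.2) =O[𝓟 (Set.uIcc a b ×ˢ Set.univ)] fun p => e p.1 p.2)
      {t} (ht : t ∈ Set.uIcc a b) : G t =O[⊤] e t :=
    hG.comp_tendsto (k := fun x => (t, x)) (tendsto_principal.2 (by simp [ht]))
  choose C hC using fun i => Asymptotics.isBigO_principal.1 (hFe i)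
  have hFi (i t) (ht : t ∈ Set.uIcc a b) : Integrable (F i t) :=
    (hslice (hFe i) ht).integrable (hF i t).continuous.aestronglyMeasurable (hei t ht)
  refine integral_eq_of_conservation_law (C := fun i => |C i| * M) hm (fun t ht => ?_) hk hF hFi
    hlaw fun i t ht => ?_
  · exact (hslice hme ht).integrable
      (hm.continuous.comp (Continuous.prodMk_right t)).aestronglyMeasurable (hei t ht)
  · calc ∫ x, ‖F i t x‖ ≤ ∫ x, |C i| * ‖e t x‖ :=
          integral_mono (hFi i t ht).norm ((hei t ht).norm.const_mul _) fun x =>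
            (hC i (t, x) ⟨ht, trivial⟩).trans (by gcongr; exact le_abs_self _)
      _ = |C i| * ∫ x, ‖e t x‖ := integral_const_mul _ _
      _ ≤ |C i| * M := by gcongr; exact heM t ht

end ConservationLaw

section LocalLaws

open Complex

theorem hasDerivAt_iteratedDeriv {F : Type*} [NormedAddCommGroup F] [NormedSpace ℝ F] {f : ℝ → F}
    {m n : ℕ} (hf : ContDiff ℝ n f) (hmn : m < n) (x : ℝ) :
    HasDerivAt (iteratedDeriv m f) (iteratedDeriv (m + 1) f x) x := by
  rw [iteratedDeriv_succ]
  exact (hf.differentiable_iteratedDeriv m (by exact_mod_cast hmn) x).hasDerivAt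

theorem iteratedDeriv_three_norm_sq {F : Type*} [NormedAddCommGroup F] [InnerProductSpace ℝ F]
    {f : ℝ → F} (hf : ContDiff ℝ 3 f) (x : ℝ) :
    iteratedDeriv 3 (fun y => ‖f y‖ ^ 2) x
      = 2 * ⟪f x, iteratedDeriv 3 f x⟫ + 6 * ⟪deriv f x, iteratedDeriv 2 f x⟫ := by
  have hf0 (y) : HasDerivAt f (deriv f y) y := by
    simpa using hasDerivAt_iteratedDeriv (m := 0) hf (by norm_num) y
  have hf1 (y) : HasDerivAt (deriv f) (iteratedDeriv 2 f y) y := by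
    simpa using hasDerivAt_iteratedDeriv (m := 1) hf (by norm_num) y
  have hf2 (y) := hasDerivAt_iteratedDeriv (m := 2) hf (by norm_num) y
  have h1 : deriv (fun y => ‖f y‖ ^ 2) = fun y => 2 * ⟪f y, deriv f y⟫ :=
    funext fun y => (hf0 y).norm_sq.deriv
  have h2 : deriv (fun y => 2 * ⟪f y, deriv f y⟫)
      = fun y => 2 * (⟪f y, iteratedDeriv 2 f y⟫ + ⟪deriv f y, deriv f y⟫) :=
    funext fun y => (((hf0 y).inner ℝ (hf1 y)).const_mul 2).deriv
  rw [iteratedDeriv_succ', h1, iteratedDeriv_succ', h2, iteratedDeriv_one,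
    ((((hf0 x).inner ℝ (hf2 x)).fun_add ((hf1 x).inner ℝ (hf1 x))).const_mul 2).deriv,
    real_inner_comm (deriv f x) (iteratedDeriv 2 f x)]
  ring

theorem inner_I_mul (z w : ℂ) : ⟪z, I * w⟫ = (z * (starRingEnd ℂ) w).im := by
  simp only [Complex.inner, mul_re, mul_im, conj_re, conj_im, I_re, I_im]
  ring

theorem eq_I_mul_of_schrodinger {z z₂ w : ℂ} (h : I * z + z₂ = w) : z = I * (z₂ - w) := by
  linear_combination -I * h + z * I_sq

theorem hasDerivAt_norm_sq_of_schrodinger {u : ℝ → ℝ → ℂ} {u' : ℂ} {W t x : ℝ}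
    (hu : ContDiff ℝ 2 (u t)) (hut : HasDerivAt (fun s => u s x) u' t)
    (heq : I * u' + iteratedDeriv 2 (u t) x = W * u t x) :
    HasDerivAt (fun s => ‖u s x‖ ^ 2) (deriv (fun y => 2 * ⟪u t y, I * deriv (u t) y⟫) x) t := by
  have hu0 : HasDerivAt (u t) (deriv (u t) x) x := (hu.differentiable two_ne_zero x).hasDerivAt
  have hu1 : HasDerivAt (deriv (u t)) (iteratedDeriv 2 (u t) x) x := by
    simpa using hasDerivAt_iteratedDeriv (m := 1) hu (by norm_num) x
  rw [((hu0.inner ℝ (hu1.const_mul I)).const_mul 2).deriv]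
  refine hut.norm_sq.congr_deriv ?_
  rw [eq_I_mul_of_schrodinger heq]
  simp only [inner_I_mul, map_sub, map_mul, mul_im, sub_re, sub_im, mul_re, conj_re, conj_im,
    conj_ofReal, ofReal_re, ofReal_im]
  ring

theorem hasDerivAt_inner_I_mul_deriv_of_schrodinger {u : ℝ → ℝ → ℂ}
    (hu : ContDiff ℝ 3 fun p : ℝ × ℝ => u p.1 p.2) {W : ℝ → ℝ} (hW : Differentiable ℝ W) {t : ℝ}
    (heq : ∀ y, I * deriv (fun s => u s y) t + iteratedDeriv 2 (u t) y = W y * u t y) (x : ℝ) :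
    HasDerivAt (fun s => ⟪u s x, I * deriv (u s) x⟫)
      (deriv (fun y => 2 * ‖deriv (u t) y‖ ^ 2) x
        - iteratedDeriv 3 (fun y => ‖u t y‖ ^ 2) x / 2 + deriv W x * ‖u t x‖ ^ 2) t := by
  have hut3 : ContDiff ℝ 3 (u t) := hu.comp (contDiff_prodMk_right t)
  have hu0 : HasDerivAt (u t) (deriv (u t) x) x := (hut3.differentiable (by simp) x).hasDerivAt
  have hu1 : HasDerivAt (deriv (u t)) (iteratedDeriv 2 (u t) x) x := by
    simpa using hasDerivAt_iteratedDeriv (m := 1) hut3 (by norm_num) x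
  have hu2 := hasDerivAt_iteratedDeriv (m := 2) hut3 (by norm_num) x
  have hut (y) : HasDerivAt (fun s => u s y) (I * (iteratedDeriv 2 (u t) y - W y * u t y)) t := by
    rw [← eq_I_mul_of_schrodinger (heq y)]
    exact (hasDerivAt_curry_left (hu.differentiable (by simp)) t y).differentiableAt.hasDerivAt
  have huxt := hasDerivAt_deriv_curry_right (hu.of_le (by norm_num)) hut x
  rw [((hu2.fun_sub ((hW x).hasDerivAt.ofReal_comp.fun_mul hu0)).const_mul I).deriv] at huxt
  refine ((hut x).inner ℝ (huxt.const_mul I)).congr_deriv ?_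
  rw [(hu1.norm_sq.const_mul 2).deriv, iteratedDeriv_three_norm_sq hut3, ← normSq_eq_norm_sq]
  simp only [Complex.inner, normSq_apply, mul_re, mul_im, add_re, add_im, sub_re, sub_im, conj_re,
    conj_im, I_re, I_im, ofReal_re, ofReal_im]
  ring

theorem hasDerivAt_sq_of_korteweg_de_vries {v : ℝ → ℝ → ℝ} {v' f t x : ℝ} (hv : ContDiff ℝ 3 (v t))
    (hvt : HasDerivAt (fun s => v s x) v' t)
    (heq : v' + iteratedDeriv 3 (v t) x + v t x * deriv (v t) x = f) :
    HasDerivAt (fun s => v s x ^ 2)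
      (deriv (fun y => 3 * deriv (v t) y ^ 2 - 2 / 3 * v t y ^ 3) x
        - iteratedDeriv 3 (fun y => v t y ^ 2) x + 2 * v t x * f) t := by
  have hv0 : HasDerivAt (v t) (deriv (v t) x) x := (hv.differentiable (by simp) x).hasDerivAt
  have hv1 : HasDerivAt (deriv (v t)) (iteratedDeriv 2 (v t) x) x := by
    simpa using hasDerivAt_iteratedDeriv (m := 1) hv (by norm_num) x
  have hv_sq : iteratedDeriv 3 (fun y => v t y ^ 2) x
      = 2 * (iteratedDeriv 3 (v t) x * v t x) + 6 * (iteratedDeriv 2 (v t) x * deriv (v t) x) := by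
    simpa using iteratedDeriv_three_norm_sq hv x
  refine (hvt.pow 2).congr_deriv ?_
  rw [(((hv1.fun_pow 2).const_mul 3).fun_sub ((hv0.fun_pow 3).const_mul (2 / 3))).deriv, hv_sq,
    ← heq]
  push_cast
  ring

end LocalLaws

section SobolevBound

variable {F : Type*} [NormedAddCommGroup F] [InnerProductSpace ℝ F]

theorem norm_sq_le_integral_norm_sq_add_norm_deriv_sq {f : ℝ → F} (hf : ContDiff ℝ 1 f)
    (hfi : Integrable fun y => ‖f y‖ ^ 2 + ‖deriv f y‖ ^ 2) (x : ℝ) :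
    ‖f x‖ ^ 2 ≤ ∫ y, ‖f y‖ ^ 2 + ‖deriv f y‖ ^ 2 := by
  have hderiv (y) : HasDerivAt (fun y => ‖f y‖ ^ 2) (2 * ⟪f y, deriv f y⟫) y :=
    (hf.differentiable one_ne_zero y).hasDerivAt.norm_sq
  have hyoung (y) : ‖2 * ⟪f y, deriv f y⟫‖ ≤ ‖f y‖ ^ 2 + ‖deriv f y‖ ^ 2 := by
    rw [norm_mul, Real.norm_two]
    nlinarith [norm_inner_le_norm (𝕜 := ℝ) (f y) (deriv f y), sq_nonneg (‖f y‖ - ‖deriv f y‖)]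
  have hsq : Integrable fun y => ‖f y‖ ^ 2 := hfi.mono'
    (hf.continuous.norm.pow 2).aestronglyMeasurable (Eventually.of_forall fun y => by simp)
  have hint : Integrable fun y => 2 * ⟪f y, deriv f y⟫ := hfi.mono'
    (continuous_const.mul (hf.continuous.inner (hf.continuous_deriv le_rfl))).aestronglyMeasurable
    (Eventually.of_forall hyoung)
  have hbot : Tendsto (fun y => ‖f y‖ ^ 2) atBot (𝓝 0) :=
    tendsto_zero_of_hasDerivAt_of_integrableOn_Iic (a := x) (fun y _ => hderiv y)
      hint.integrableOn hsq.integrableOn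
  calc ‖f x‖ ^ 2
      = ∫ y in Set.Iic x, 2 * ⟪f y, deriv f y⟫ := by
        rw [integral_Iic_of_hasDerivAt_of_tendsto' (fun y _ => hderiv y) hint.integrableOn hbot,
          sub_zero]
    _ ≤ ∫ y in Set.Iic x, ‖f y‖ ^ 2 + ‖deriv f y‖ ^ 2 :=
        integral_mono hint.integrableOn hfi.integrableOn fun y =>
          (le_abs_self _).trans (hyoung y)
    _ ≤ ∫ y, ‖f y‖ ^ 2 + ‖deriv f y‖ ^ 2 :=
        setIntegral_le_integral hfi (Eventually.of_forall fun y => by positivity)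

theorem isBigO_one_of_norm_sq_add_norm_deriv_sq_le {w : ℝ → ℝ → F} {e : ℝ → ℝ → ℝ} {S : Set ℝ}
    {C : ℝ} (hw : ∀ t, ContDiff ℝ 1 (w t))
    (hwe : ∀ t x, ‖w t x‖ ^ 2 + ‖deriv (w t) x‖ ^ 2 ≤ e t x)
    (hei : ∀ t, Integrable (e t)) (hC : ∀ t ∈ S, ∫ x, e t x ≤ C) :
    (fun p : ℝ × ℝ => w p.1 p.2) =O[𝓟 (S ×ˢ Set.univ)] (1 : ℝ × ℝ → ℝ) := by
  refine Asymptotics.isBigO_principal.2 ⟨√C, fun ⟨t, x⟩ ⟨ht, _⟩ => ?_⟩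
  have hcont : Continuous fun x => ‖w t x‖ ^ 2 + ‖deriv (w t) x‖ ^ 2 :=
    ((hw t).continuous.norm.pow 2).add (((hw t).continuous_deriv le_rfl).norm.pow 2)
  have hint : Integrable fun x => ‖w t x‖ ^ 2 + ‖deriv (w t) x‖ ^ 2 :=
    (hei t).mono' hcont.aestronglyMeasurable (Eventually.of_forall fun x => by
      rw [Real.norm_of_nonneg (by positivity)]
      exact hwe t x)
  rw [Pi.one_apply, norm_one, mul_one]
  exact Real.le_sqrt_of_sq_le ((norm_sq_le_integral_norm_sq_add_norm_deriv_sq (hw t) hint x).trans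
    ((integral_mono hint (hei t) (hwe t)).trans (hC t ht)))

end SobolevBound

section EnergyDensity

variable {u : ℝ → ℝ → ℂ} {v : ℝ → ℝ → ℝ} {l : Filter (ℝ × ℝ)}

/-- The density `|u|² + |∂ₓu|² + v² + (∂ₓv)²` of the squared `H¹` norm of `(u, v)`: the integrable
weight against which the densities and fluxes of the conservation laws are measured. -/
noncomputable def energyDensity (u : ℝ → ℝ → ℂ) (v : ℝ → ℝ → ℝ) (t x : ℝ) : ℝ :=
  ‖u t x‖ ^ 2 + ‖deriv (u t) x‖ ^ 2 + v t x ^ 2 + deriv (v t) x ^ 2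

theorem energyDensity_nonneg (t x : ℝ) : 0 ≤ energyDensity u v t x := by
  unfold energyDensity
  positivity

theorem isBigO_energyDensity_of_le {f : ℝ → ℝ → ℝ} (h : ∀ t x, |f t x| ≤ energyDensity u v t x) :
    (fun p : ℝ × ℝ => f p.1 p.2) =O[l] fun p => energyDensity u v p.1 p.2 :=
  .of_norm_le fun p => h p.1 p.2

theorem isBigO_norm_sq_energyDensity :
    (fun p : ℝ × ℝ => ‖u p.1 p.2‖ ^ 2) =O[l] fun p => energyDensity u v p.1 p.2 :=
  isBigO_energyDensity_of_le (f := fun t x => ‖u t x‖ ^ 2) fun t x => by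
    rw [abs_of_nonneg (by positivity), energyDensity]
    linarith [sq_nonneg ‖deriv (u t) x‖, sq_nonneg (v t x), sq_nonneg (deriv (v t) x)]

theorem isBigO_norm_deriv_sq_energyDensity :
    (fun p : ℝ × ℝ => ‖deriv (u p.1) p.2‖ ^ 2) =O[l] fun p => energyDensity u v p.1 p.2 :=
  isBigO_energyDensity_of_le (f := fun t x => ‖deriv (u t) x‖ ^ 2) fun t x => by
    rw [abs_of_nonneg (by positivity), energyDensity]
    linarith [sq_nonneg ‖u t x‖, sq_nonneg (v t x), sq_nonneg (deriv (v t) x)]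

theorem isBigO_sq_energyDensity :
    (fun p : ℝ × ℝ => v p.1 p.2 ^ 2) =O[l] fun p => energyDensity u v p.1 p.2 :=
  isBigO_energyDensity_of_le (f := fun t x => v t x ^ 2) fun t x => by
    rw [abs_of_nonneg (by positivity), energyDensity]
    linarith [sq_nonneg ‖u t x‖, sq_nonneg ‖deriv (u t) x‖, sq_nonneg (deriv (v t) x)]

theorem isBigO_deriv_sq_energyDensity :
    (fun p : ℝ × ℝ => deriv (v p.1) p.2 ^ 2) =O[l] fun p => energyDensity u v p.1 p.2 :=
  isBigO_energyDensity_of_le (f := fun t x => deriv (v t) x ^ 2) fun t x => by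
    rw [abs_of_nonneg (by positivity), energyDensity]
    linarith [sq_nonneg ‖u t x‖, sq_nonneg ‖deriv (u t) x‖, sq_nonneg (v t x)]

theorem isBigO_inner_I_mul_deriv_energyDensity :
    (fun p : ℝ × ℝ => ⟪u p.1 p.2, Complex.I * deriv (u p.1) p.2⟫) =O[l]
      fun p => energyDensity u v p.1 p.2 :=
  isBigO_energyDensity_of_le (f := fun t x => ⟪u t x, Complex.I * deriv (u t) x⟫) fun t x => by
    have hcs := abs_real_inner_le_norm (u t x) (Complex.I * deriv (u t) x)
    rw [norm_mul, Complex.norm_I, one_mul] at hcs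
    rw [energyDensity]
    nlinarith [sq_nonneg (‖u t x‖ - ‖deriv (u t) x‖), sq_nonneg (v t x), sq_nonneg (deriv (v t) x)]

end EnergyDensity

section Momentum

variable {α β γ : ℝ} {u : ℝ → ℝ → ℂ} {v : ℝ → ℝ → ℝ} {l : Filter (ℝ × ℝ)}

/-- The density `α v² + 2γ Im(u ∂ₓū)` of the momentum `I₃`, with `Im(u ∂ₓū)` encoded as the real
inner product of `u` and `i ∂ₓu` so that it is differentiated by the product rule. -/
noncomputable def momentumDensity (α γ : ℝ) (u : ℝ → ℝ → ℂ) (v : ℝ → ℝ → ℝ) (t x : ℝ) : ℝ :=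
  α * v t x ^ 2 + 2 * γ * ⟪u t x, Complex.I * deriv (u t) x⟫

/-- The flux `A` of the momentum law `∂ₜ(α v² + 2γ Im(u ∂ₓū)) = ∂ₓA + ∂ₓ³B`. -/
noncomputable def transportFlux (α β γ : ℝ) (u : ℝ → ℝ → ℂ) (v : ℝ → ℝ → ℝ) (t x : ℝ) : ℝ :=
  α * (3 * deriv (v t) x ^ 2 - 2 / 3 * v t x ^ 3) + 2 * γ * (2 * ‖deriv (u t) x‖ ^ 2)
    + 2 * α * γ * (v t x * ‖u t x‖ ^ 2) + β * γ * (‖u t x‖ ^ 2) ^ 2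

/-- The flux `B` of the momentum law `∂ₜ(α v² + 2γ Im(u ∂ₓū)) = ∂ₓA + ∂ₓ³B`. -/
noncomputable def dispersiveFlux (α γ : ℝ) (u : ℝ → ℝ → ℂ) (v : ℝ → ℝ → ℝ) (t x : ℝ) : ℝ :=
  -α * v t x ^ 2 + -γ * ‖u t x‖ ^ 2

theorem isBigO_momentumDensity :
    (fun p : ℝ × ℝ => momentumDensity α γ u v p.1 p.2) =O[l] fun p => energyDensity u v p.1 p.2 :=
  (isBigO_sq_energyDensity.const_mul_left α).add
    (isBigO_inner_I_mul_deriv_energyDensity.const_mul_left (2 * γ))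

theorem isBigO_transportFlux (hu : (fun p : ℝ × ℝ => u p.1 p.2) =O[l] (1 : ℝ × ℝ → ℝ))
    (hv : (fun p : ℝ × ℝ => v p.1 p.2) =O[l] (1 : ℝ × ℝ → ℝ)) :
    (fun p : ℝ × ℝ => transportFlux α β γ u v p.1 p.2) =O[l]
      fun p => energyDensity u v p.1 p.2 := by
  have hv3 : (fun p : ℝ × ℝ => v p.1 p.2 ^ 3) =O[l] fun p => energyDensity u v p.1 p.2 := by
    simpa [pow_succ'] using hv.mul (isBigO_sq_energyDensity (u := u) (v := v))
  have hvu : (fun p : ℝ × ℝ => v p.1 p.2 * ‖u p.1 p.2‖ ^ 2) =O[l]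
      fun p => energyDensity u v p.1 p.2 := by
    simpa using hv.mul (isBigO_norm_sq_energyDensity (u := u) (v := v))
  have hu4 : (fun p : ℝ × ℝ => (‖u p.1 p.2‖ ^ 2) ^ 2) =O[l]
      fun p => energyDensity u v p.1 p.2 := by
    simpa [sq (‖u _ _‖ ^ 2)] using
      (hu.norm_left.pow 2).mul (isBigO_norm_sq_energyDensity (u := u) (v := v))
  exact (((((isBigO_deriv_sq_energyDensity.const_mul_left 3).sub (hv3.const_mul_left _)
    ).const_mul_left α).add ((isBigO_norm_deriv_sq_energyDensity.const_mul_left 2).const_mul_left _)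
    ).add (hvu.const_mul_left _)).add (hu4.const_mul_left _)

theorem isBigO_dispersiveFlux :
    (fun p : ℝ × ℝ => dispersiveFlux α γ u v p.1 p.2) =O[l] fun p => energyDensity u v p.1 p.2 :=
  (isBigO_sq_energyDensity.const_mul_left _).add (isBigO_norm_sq_energyDensity.const_mul_left _)

theorem contDiff_momentumDensity {n : ℕ∞ω} (hu : ContDiff ℝ (n + 1) fun p : ℝ × ℝ => u p.1 p.2)
    (hv : ContDiff ℝ n fun p : ℝ × ℝ => v p.1 p.2) :
    ContDiff ℝ n fun p : ℝ × ℝ => momentumDensity α γ u v p.1 p.2 :=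
  (contDiff_const.mul (hv.pow 2)).add (contDiff_const.mul
    ((hu.of_le le_self_add).inner ℝ (contDiff_const.mul (contDiff_deriv_curry_right hu))))

theorem contDiff_transportFlux {n : ℕ∞ω} {t : ℝ} (hu : ContDiff ℝ (n + 1) (u t))
    (hv : ContDiff ℝ (n + 1) (v t)) : ContDiff ℝ n (transportFlux α β γ u v t) := by
  have hu0 : ContDiff ℝ n fun x => ‖u t x‖ ^ 2 := (hu.of_le le_self_add).norm_sq ℝ
  have hv0 : ContDiff ℝ n (v t) := hv.of_le le_self_add
  have hu1 : ContDiff ℝ n fun x => ‖deriv (u t) x‖ ^ 2 :=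
    (contDiff_succ_iff_deriv.1 hu).2.2.norm_sq ℝ
  have : ContDiff ℝ n (deriv (v t)) := (contDiff_succ_iff_deriv.1 hv).2.2
  unfold transportFlux
  fun_prop

theorem contDiff_dispersiveFlux {n : ℕ∞ω} {t : ℝ} (hu : ContDiff ℝ n (u t))
    (hv : ContDiff ℝ n (v t)) : ContDiff ℝ n (dispersiveFlux α γ u v t) :=
  (contDiff_const.mul (hv.pow 2)).add (contDiff_const.mul (hu.norm_sq ℝ))

theorem deriv_transportFlux {t x : ℝ} (hu : ContDiff ℝ 2 (u t)) (hv : ContDiff ℝ 2 (v t)) :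
    deriv (transportFlux α β γ u v t) x
      = α * deriv (fun y => 3 * deriv (v t) y ^ 2 - 2 / 3 * v t y ^ 3) x
        + 2 * γ * deriv (fun y => 2 * ‖deriv (u t) y‖ ^ 2) x
        + 2 * γ * (α * deriv (v t) x + β * deriv (fun y => ‖u t y‖ ^ 2) x) * ‖u t x‖ ^ 2
        + 2 * γ * α * v t x * deriv (fun y => ‖u t y‖ ^ 2) x := by
  have hu0 : Differentiable ℝ fun y => ‖u t y‖ ^ 2 := (hu.norm_sq ℝ).differentiable two_ne_zero
  have hu1 : Differentiable ℝ fun y => 2 * ‖deriv (u t) y‖ ^ 2 :=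
    (((contDiff_succ_iff_deriv.1 hu).2.2.norm_sq ℝ).differentiable one_ne_zero).const_mul 2
  have hv0 : Differentiable ℝ (v t) := hv.differentiable two_ne_zero
  have : Differentiable ℝ (deriv (v t)) :=
    (contDiff_succ_iff_deriv.1 hv).2.2.differentiable one_ne_zero
  have hkdv : Differentiable ℝ fun y => 3 * deriv (v t) y ^ 2 - 2 / 3 * v t y ^ 3 := by fun_prop
  have hflux := ((((hkdv x).hasDerivAt.const_mul α).fun_add
    ((hu1 x).hasDerivAt.const_mul (2 * γ))).fun_add
    (((hv0 x).hasDerivAt.fun_mul (hu0 x).hasDerivAt).const_mul (2 * α * γ))).fun_add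
    (((hu0 x).hasDerivAt.fun_pow 2).const_mul (β * γ))
  unfold transportFlux
  rw [hflux.deriv]
  push_cast
  ring

theorem iteratedDeriv_three_dispersiveFlux {t x : ℝ} (hu : ContDiff ℝ 3 (u t))
    (hv : ContDiff ℝ 3 (v t)) :
    iteratedDeriv 3 (dispersiveFlux α γ u v t) x
      = -α * iteratedDeriv 3 (fun y => v t y ^ 2) x
        + -γ * iteratedDeriv 3 (fun y => ‖u t y‖ ^ 2) x := by
  unfold dispersiveFlux
  rw [iteratedDeriv_fun_add (contDiff_const.mul (hv.pow 2)).contDiffAt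
    (contDiff_const.mul (hu.norm_sq ℝ)).contDiffAt, iteratedDeriv_const_mul_field,
    iteratedDeriv_const_mul_field]

end Momentum

/-- Finite-energy solutions of the Schrödinger–KdV system: classical `C³` solutions whose `H¹` norm
is finite at every time and bounded on bounded time intervals, with no further decay in `x`. -/
structure IsFiniteEnergySKdVSolution (α β γ : ℝ) (u : ℝ → ℝ → ℂ) (v : ℝ → ℝ → ℝ) : Prop where
  contDiff_u : ContDiff ℝ 3 fun p : ℝ × ℝ => u p.1 p.2
  contDiff_v : ContDiff ℝ 3 fun p : ℝ × ℝ => v p.1 p.2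
  schrodinger (t x : ℝ) : Complex.I * deriv (fun s => u s x) t + iteratedDeriv 2 (u t) x
    = (α : ℂ) * u t x * (v t x : ℂ) + (β : ℂ) * u t x * (‖u t x‖ : ℂ) ^ 2
  korteweg_de_vries (t x : ℝ) :
    deriv (fun s => v s x) t + iteratedDeriv 3 (v t) x + v t x * deriv (v t) x
      = γ * deriv (fun y => ‖u t y‖ ^ 2) x
  integrable_energyDensity (t : ℝ) : Integrable (energyDensity u v t)
  exists_integral_energyDensity_le (a b : ℝ) :
    ∃ C, ∀ t ∈ Set.uIcc a b, ∫ x, energyDensity u v t x ≤ C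

namespace IsFiniteEnergySKdVSolution

variable {α β γ : ℝ} {u : ℝ → ℝ → ℂ} {v : ℝ → ℝ → ℝ}

theorem contDiff_u_slice (h : IsFiniteEnergySKdVSolution α β γ u v) (t : ℝ) :
    ContDiff ℝ 3 (u t) :=
  h.contDiff_u.comp (contDiff_prodMk_right t)

theorem contDiff_v_slice (h : IsFiniteEnergySKdVSolution α β γ u v) (t : ℝ) :
    ContDiff ℝ 3 (v t) :=
  h.contDiff_v.comp (contDiff_prodMk_right t)

theorem hasDerivAt_u_time (h : IsFiniteEnergySKdVSolution α β γ u v) (t x : ℝ) :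
    HasDerivAt (fun s => u s x) (deriv (fun s => u s x) t) t :=
  (hasDerivAt_curry_left (h.contDiff_u.differentiable three_ne_zero) t x
    ).differentiableAt.hasDerivAt

theorem hasDerivAt_v_time (h : IsFiniteEnergySKdVSolution α β γ u v) (t x : ℝ) :
    HasDerivAt (fun s => v s x) (deriv (fun s => v s x) t) t :=
  (hasDerivAt_curry_left (h.contDiff_v.differentiable three_ne_zero) t x
    ).differentiableAt.hasDerivAt

theorem schrodinger_potential (h : IsFiniteEnergySKdVSolution α β γ u v) (t x : ℝ) :
    Complex.I * deriv (fun s => u s x) t + iteratedDeriv 2 (u t) x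
      = ((α * v t x + β * ‖u t x‖ ^ 2 : ℝ) : ℂ) * u t x := by
  rw [h.schrodinger t x]
  push_cast
  ring

theorem isBigO_u_one (h : IsFiniteEnergySKdVSolution α β γ u v) (a b : ℝ) :
    (fun p : ℝ × ℝ => u p.1 p.2) =O[𝓟 (Set.uIcc a b ×ˢ Set.univ)] (1 : ℝ × ℝ → ℝ) := by
  obtain ⟨C, hC⟩ := h.exists_integral_energyDensity_le a b
  refine isBigO_one_of_norm_sq_add_norm_deriv_sq_le
    (fun t => (h.contDiff_u_slice t).of_le (by norm_num)) (fun t x => ?_)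
    h.integrable_energyDensity hC
  rw [energyDensity]
  linarith [sq_nonneg (v t x), sq_nonneg (deriv (v t) x)]

theorem isBigO_v_one (h : IsFiniteEnergySKdVSolution α β γ u v) (a b : ℝ) :
    (fun p : ℝ × ℝ => v p.1 p.2) =O[𝓟 (Set.uIcc a b ×ˢ Set.univ)] (1 : ℝ × ℝ → ℝ) := by
  obtain ⟨C, hC⟩ := h.exists_integral_energyDensity_le a b
  refine isBigO_one_of_norm_sq_add_norm_deriv_sq_le
    (fun t => (h.contDiff_v_slice t).of_le (by norm_num)) (fun t x => ?_)
    h.integrable_energyDensity hC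
  simp only [energyDensity, Real.norm_eq_abs, sq_abs]
  linarith [sq_nonneg ‖u t x‖, sq_nonneg ‖deriv (u t) x‖]

theorem integral_eq_of_conservation_law (h : IsFiniteEnergySKdVSolution α β γ u v) {ι : Type*}
    [Fintype ι] {k : ι → ℕ} {m : ℝ → ℝ → ℝ} {F : ι → ℝ → ℝ → ℝ} {a b : ℝ}
    (hm : ContDiff ℝ 1 fun p : ℝ × ℝ => m p.1 p.2)
    (hme : (fun p : ℝ × ℝ => m p.1 p.2) =O[𝓟 (Set.uIcc a b ×ˢ Set.univ)]
      fun p => energyDensity u v p.1 p.2)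
    (hk : ∀ i, k i ≠ 0) (hF : ∀ i t, ContDiff ℝ (k i) (F i t))
    (hFe : ∀ i, (fun p : ℝ × ℝ => F i p.1 p.2) =O[𝓟 (Set.uIcc a b ×ˢ Set.univ)]
      fun p => energyDensity u v p.1 p.2)
    (hlaw : ∀ t x, deriv (fun s => m s x) t = ∑ i, iteratedDeriv (k i) (F i t) x) :
    ∫ x, m b x = ∫ x, m a x := by
  obtain ⟨C, hC⟩ := h.exists_integral_energyDensity_le a b
  refine integral_eq_of_conservation_law_of_isBigO (M := C)
    (fun t _ => h.integrable_energyDensity t) (fun t ht => ?_) hm hme hk hF hFe hlaw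
  simpa only [Real.norm_of_nonneg (energyDensity_nonneg t _)] using hC t ht

theorem integral_norm_sq_eq (h : IsFiniteEnergySKdVSolution α β γ u v) (a b : ℝ) :
    ∫ x, ‖u b x‖ ^ 2 = ∫ x, ‖u a x‖ ^ 2 := by
  have hu2 (t) : ContDiff ℝ 2 (u t) := (h.contDiff_u_slice t).of_le (by norm_num)
  refine h.integral_eq_of_conservation_law (m := fun t x => ‖u t x‖ ^ 2) (k := fun _ : Unit => 1)
    (F := fun _ t x => 2 * ⟪u t x, Complex.I * deriv (u t) x⟫)
    ((h.contDiff_u.of_le (by norm_num)).norm_sq ℝ) isBigO_norm_sq_energyDensity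
    (fun _ => one_ne_zero) (fun _ t => ?_)
    (fun _ => isBigO_inner_I_mul_deriv_energyDensity.const_mul_left 2) (fun t x => ?_)
  · exact contDiff_const.mul (((hu2 t).of_le (by norm_num)).inner ℝ
      (contDiff_const.mul (contDiff_succ_iff_deriv.1 (hu2 t)).2.2))
  · rw [Fintype.sum_unique, iteratedDeriv_one]
    exact (hasDerivAt_norm_sq_of_schrodinger (hu2 t) (h.hasDerivAt_u_time t x)
      (h.schrodinger_potential t x)).deriv

/-- The coupling terms `2αγ v ∂ₓ|u|²` from `v²` and `2αγ |u|² ∂ₓv` from `Im(u ∂ₓū)` add up to an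
exact derivative, which is why only this combination of the two is conserved. -/
theorem hasDerivAt_momentumDensity (h : IsFiniteEnergySKdVSolution α β γ u v) (t x : ℝ) :
    HasDerivAt (fun s => momentumDensity α γ u v s x)
      (deriv (transportFlux α β γ u v t) x + iteratedDeriv 3 (dispersiveFlux α γ u v t) x) t := by
  have hu3 := h.contDiff_u_slice t
  have hv3 := h.contDiff_v_slice t
  have hu : Differentiable ℝ fun y => ‖u t y‖ ^ 2 := (hu3.norm_sq ℝ).differentiable three_ne_zero
  have hv : Differentiable ℝ (v t) := hv3.differentiable three_ne_zero
  have hW (y) : HasDerivAt (fun y => α * v t y + β * ‖u t y‖ ^ 2)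
      (α * deriv (v t) y + β * deriv (fun y => ‖u t y‖ ^ 2) y) y :=
    ((hv y).hasDerivAt.const_mul α).fun_add ((hu y).hasDerivAt.const_mul β)
  have hsq := hasDerivAt_sq_of_korteweg_de_vries hv3 (h.hasDerivAt_v_time t x)
    (h.korteweg_de_vries t x)
  have hmom := hasDerivAt_inner_I_mul_deriv_of_schrodinger h.contDiff_u
    (fun y => (hW y).differentiableAt) (h.schrodinger_potential t) x
  refine ((hsq.const_mul α).fun_add (hmom.const_mul (2 * γ))).congr_deriv ?_
  rw [(hW x).deriv, deriv_transportFlux (hu3.of_le (by norm_num)) (hv3.of_le (by norm_num)),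
    iteratedDeriv_three_dispersiveFlux hu3 hv3]
  ring

theorem integral_momentumDensity_eq (h : IsFiniteEnergySKdVSolution α β γ u v) (a b : ℝ) :
    ∫ x, momentumDensity α γ u v b x = ∫ x, momentumDensity α γ u v a x := by
  have hA (t) : ContDiff ℝ 1 (transportFlux α β γ u v t) :=
    contDiff_transportFlux ((h.contDiff_u_slice t).of_le (by norm_num))
      ((h.contDiff_v_slice t).of_le (by norm_num))
  have hB (t) : ContDiff ℝ 3 (dispersiveFlux α γ u v t) :=
    contDiff_dispersiveFlux (h.contDiff_u_slice t) (h.contDiff_v_slice t)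
  refine h.integral_eq_of_conservation_law (k := ![1, 3])
    (F := ![transportFlux α β γ u v, dispersiveFlux α γ u v])
    (contDiff_momentumDensity (h.contDiff_u.of_le (by norm_num))
      (h.contDiff_v.of_le (by norm_num)))
    isBigO_momentumDensity (by simp [Fin.forall_fin_two]) (Fin.forall_fin_two.2 ⟨hA, hB⟩)
    (Fin.forall_fin_two.2
      ⟨isBigO_transportFlux (h.isBigO_u_one a b) (h.isBigO_v_one a b), isBigO_dispersiveFlux⟩)
    fun t x => ?_
  simpa [Fin.sum_univ_two] using (h.hasDerivAt_momentumDensity t x).deriv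

end IsFiniteEnergySKdVSolution

theorem integrable_norm_sq_schwartz {F : Type*} [NormedAddCommGroup F] [NormedSpace ℝ F]
    (f : SchwartzMap ℝ F) : Integrable fun x => ‖f x‖ ^ 2 :=
  (memLp_two_iff_integrable_sq_norm f.continuous.aestronglyMeasurable).1 (f.memLp 2)

namespace IsSKdVSolution

variable {α β γ : ℝ} {u : ℝ → ℝ → ℂ} {v : ℝ → ℝ → ℝ}

theorem integrable_u_sq (h : IsSKdVSolution α β γ u v) (t : ℝ) :
    (Integrable fun x => ‖u t x‖ ^ 2) ∧ Integrable fun x => ‖deriv (u t) x‖ ^ 2 := by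
  obtain ⟨f, hf⟩ := h.2.2.1 t
  rw [← show ⇑f = u t from funext hf]
  exact ⟨integrable_norm_sq_schwartz f, integrable_norm_sq_schwartz (SchwartzMap.derivCLM ℝ ℂ f)⟩

theorem integrable_v_sq (h : IsSKdVSolution α β γ u v) (t : ℝ) :
    (Integrable fun x => ‖v t x‖ ^ 2) ∧ Integrable fun x => ‖deriv (v t) x‖ ^ 2 := by
  obtain ⟨g, hg⟩ := h.2.2.2.1 t
  rw [← show ⇑g = v t from funext hg]
  exact ⟨integrable_norm_sq_schwartz g, integrable_norm_sq_schwartz (SchwartzMap.derivCLM ℝ ℝ g)⟩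

theorem integrable_energyDensity (h : IsSKdVSolution α β γ u v) (t : ℝ) :
    Integrable (energyDensity u v t) := by
  have hu := h.integrable_u_sq t
  have hv := h.integrable_v_sq t
  simp only [Real.norm_eq_abs, sq_abs] at hv
  exact ((hu.1.add hu.2).add hv.1).add hv.2

theorem exists_integral_energyDensity_le (h : IsSKdVSolution α β γ u v) :
    ∃ C, ∀ t, ∫ x, energyDensity u v t x ≤ C := by
  obtain ⟨C, hC⟩ := h.2.2.2.2.2.2
  refine ⟨C, fun t => le_of_eq_of_le ?_ (hC t)⟩
  have hu := h.integrable_u_sq t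
  have hv := h.integrable_v_sq t
  simp only [Real.norm_eq_abs, sq_abs] at hv
  have huu : Integrable fun x => ‖u t x‖ ^ 2 + ‖deriv (u t) x‖ ^ 2 := hu.1.add hu.2
  have huuv : Integrable fun x => ‖u t x‖ ^ 2 + ‖deriv (u t) x‖ ^ 2 + v t x ^ 2 := huu.add hv.1
  simp only [energyDensity]
  rw [integral_add huuv hv.2, integral_add huu hv.1, integral_add hu.1 hu.2]

theorem isFiniteEnergySKdVSolution (h : IsSKdVSolution α β γ u v) :
    IsFiniteEnergySKdVSolution α β γ u v where
  contDiff_u := contDiff_infty.1 h.1 3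
  contDiff_v := contDiff_infty.1 h.2.1 3
  schrodinger := h.2.2.2.2.1
  korteweg_de_vries := h.2.2.2.2.2.1
  integrable_energyDensity := h.integrable_energyDensity
  exists_integral_energyDensity_le _ _ :=
    h.exists_integral_energyDensity_le.imp fun _ hC t _ => hC t

end IsSKdVSolution

theorem skdv_conservation_I1_I3_general {α β γ : ℝ} {u : ℝ → ℝ → ℂ} {v : ℝ → ℝ → ℝ}
    (hsol : IsFiniteEnergySKdVSolution α β γ u v) :
    (∀ t : ℝ, ∫ x, ‖u t x‖ ^ 2 = ∫ x, ‖u 0 x‖ ^ 2) ∧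
    ∀ t : ℝ,
      ∫ x, (α * v t x ^ 2 + 2 * γ * (u t x * (starRingEnd ℂ) (deriv (u t) x)).im)
        = ∫ x, (α * v 0 x ^ 2 + 2 * γ * (u 0 x * (starRingEnd ℂ) (deriv (u 0) x)).im) :=
  ⟨fun t => hsol.integral_norm_sq_eq 0 t, fun t => by
    simpa only [momentumDensity, inner_I_mul] using hsol.integral_momentumDensity_eq 0 t⟩

/-- Conservation of `I₁(t) = ∫ |u|²` and `I₃(t) = ∫ (α v² + 2γ Im(u ∂ₓū))` for regular
    solutions of the Schrödinger–KdV system. -/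
theorem skdv_conservation_I1_I3 (α β γ : ℝ)
    (u : ℝ → ℝ → ℂ) (v : ℝ → ℝ → ℝ) (hsol : IsSKdVSolution α β γ u v) :
    (∀ t : ℝ, (∫ x : ℝ, ‖u t x‖ ^ 2) = ∫ x : ℝ, ‖u 0 x‖ ^ 2) ∧
    (∀ t : ℝ,
      (∫ x : ℝ, (α * (v t x) ^ 2 +
          2 * γ * (u t x * (starRingEnd ℂ) (deriv (u t) x)).im))
        = ∫ x : ℝ, (α * (v 0 x) ^ 2 +
            2 * γ * (u 0 x * (starRingEnd ℂ) (deriv (u 0) x)).im)) := by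
  exact skdv_conservation_I1_I3_general hsol.isFiniteEnergySKdVSolution
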